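/- arXiv:2312.09083 — 2 statements merged into one kernel-verified Lean document; each statement's English description precedes it below -/
import Mathlib

section
/- Let n ≥ 1, G ∈ 𝒢_{n,1}, Σ a topological space, and μ a Borel probability measure on Σ. If the set 𝕍_*(G) of compliant pairs satisfying the averaged-controllability rank criterion is nonempty, then 𝕍_*(G) is dense in 𝕍(G) in the uniform topology. -/
open MeasureTheory BoundedContinuousFunction

/-- Node type: `none` is the control node `β`, `some i` is the state node `α_i`. -/
abbrev Node (n : ℕ) := Option (Fin n)

/-- The set `𝕍(G)` of compliant pairs, inside the product of the spaces of bounded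
continuous matrix- and vector-valued functions on `S` (each with the uniform topology). -/
def VG (n : ℕ) (E : Set (Node n × Node n)) (S : Type*) [TopologicalSpace S] :
    Set ((S →ᵇ (Fin n → Fin n → ℝ)) × (S →ᵇ (Fin n → ℝ))) :=
  {p | (∀ σ (i j : Fin n), ((some j : Node n), (some i : Node n)) ∉ E → p.1 σ i j = 0) ∧
       (∀ σ (i : Fin n), ((none : Node n), (some i : Node n)) ∉ E → p.2 σ i = 0)}

/-- The averaged-controllability rank criterion for a pair in `𝕍(G)`. -/
def RankCriterionB {n : ℕ} {S : Type*} [TopologicalSpace S] [MeasurableSpace S]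
    (μ : Measure S) (p : (S →ᵇ (Fin n → Fin n → ℝ)) × (S →ᵇ (Fin n → ℝ))) : Prop :=
  Submodule.span ℝ {x : Fin n → ℝ |
    ∃ k : ℕ, x = ∫ σ, (Matrix.of (p.1 σ) ^ k).mulVec (p.2 σ) ∂μ} = ⊤

def WeaklyConnected {V : Type*} (E : Set (V × V)) : Prop :=
  ∀ u v : V, ∃ (k : ℕ) (w : ℕ → V), w 0 = u ∧ w k = v ∧
    ∀ t < k, (w t, w (t + 1)) ∈ E ∨ (w (t + 1), w t) ∈ E

/-- Membership in the class `𝒢_{n,1}`. -/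
def MemG (n : ℕ) (E : Set (Node n × Node n)) : Prop :=
  (∀ e ∈ E, e.2 ≠ (none : Node n)) ∧ WeaklyConnected E

/-!
Put the entries of a pair `(A, b)` in the commutative ring `R` of bounded continuous functions, on
which integration is a linear functional `L`. Along the segment from `p` to a controllable pair `q`,
each coordinate of `L (Aᵏ b)` is a polynomial in the segment parameter `t`. At `t = 1` some `n` of
these vectors form a matrix with nonzero determinant; this determinant is a polynomial in `t`, so it
vanishes for only finitely many `t`: the pairs at small `t > 0` are controllable, and they tend to
`p` as `t → 0`.
-/

open Filter Polynomial Topology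
open scoped Matrix

section FamiliesOfVectors

variable {ι κ K : Type*} [Field K]

lemma exists_linearIndependent_comp_of_span_eq_top [Finite ι] {v : κ → ι → K}
    (hv : Submodule.span K (Set.range v) = ⊤) : ∃ c : ι → κ, LinearIndependent K (v ∘ c) := by
  obtain ⟨τ, a, -, hspan, hli⟩ := exists_linearIndependent' K v
  let B := Module.Basis.mk hli (hspan.trans hv).ge
  exact ⟨a ∘ (Pi.basisFun K ι).indexEquiv B, hli.comp _ (Equiv.injective _)⟩

lemma span_range_eq_top_iff_exists_det_ne_zero [Fintype ι] [DecidableEq ι] {v : κ → ι → K} :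
    Submodule.span K (Set.range v) = ⊤ ↔ ∃ c : ι → κ, (Matrix.of (v ∘ c)).det ≠ 0 := by
  have det_ne_zero_iff (c : ι → κ) :
      (Matrix.of (v ∘ c)).det ≠ 0 ↔ LinearIndependent K (v ∘ c) := by
    rw [← isUnit_iff_ne_zero, ← Matrix.isUnit_iff_isUnit_det,
      ← Matrix.linearIndependent_rows_iff_isUnit]
    rfl
  simp only [det_ne_zero_iff]
  refine ⟨exists_linearIndependent_comp_of_span_eq_top, fun ⟨c, hc⟩ => top_le_iff.mp ?_⟩
  rw [← hc.span_eq_top_of_card_eq_finrank' (by simp)]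
  exact Submodule.span_mono (Set.range_comp_subset_range c v)

lemma eventually_cofinite_span_eval_eq_top [Finite ι] {Q : κ → ι → K[X]} {t₀ : K}
    (h : Submodule.span K (Set.range fun k i => (Q k i).eval t₀) = ⊤) :
    ∀ᶠ t in cofinite, Submodule.span K (Set.range fun k i => (Q k i).eval t) = ⊤ := by
  classical
  cases nonempty_fintype ι
  obtain ⟨c, hc⟩ := span_range_eq_top_iff_exists_det_ne_zero.mp h
  have eval_det (t : K) : (Matrix.of (Q ∘ c)).det.eval t
      = (Matrix.of ((fun k i => (Q k i).eval t) ∘ c)).det :=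
    RingHom.map_det (evalRingHom t) _
  have det_ne_zero : (Matrix.of (Q ∘ c)).det ≠ 0 := fun h0 => hc (by rw [← eval_det, h0, eval_zero])
  filter_upwards [eventually_cofinite_not_isRoot det_ne_zero] with t ht
  exact span_range_eq_top_iff_exists_det_ne_zero.mpr ⟨c, by rwa [← eval_det]⟩

end FamiliesOfVectors

lemma exists_eval_eq_apply_eval_algebraMap {K R : Type*} [CommSemiring K] [CommSemiring R]
    [Algebra K R] (L : R →ₗ[K] K) (P : R[X]) :
    ∃ Q : K[X], ∀ t, Q.eval t = L (P.eval (algebraMap K R t)) := by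
  induction P using Polynomial.induction_on' with
  | add P₁ P₂ h₁ h₂ =>
    obtain ⟨Q₁, hQ₁⟩ := h₁
    obtain ⟨Q₂, hQ₂⟩ := h₂
    exact ⟨Q₁ + Q₂, fun t => by simp only [eval_add, map_add, hQ₁, hQ₂]⟩
  | monomial m a =>
    refine ⟨monomial m (L a), fun t => ?_⟩
    rw [eval_monomial, eval_monomial, ← map_pow, mul_comm a, ← Algebra.smul_def, map_smul,
      smul_eq_mul, mul_comm]

section AveragedKrylov

variable {ι K R : Type*} [Fintype ι] [DecidableEq ι]

lemma map_pow_mulVec {T : Type*} [Semiring R] [Semiring T] (f : R →+* T) (A : Matrix ι ι R)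
    (b : ι → R) (k : ℕ) (i : ι) : f ((A ^ k *ᵥ b) i) = (A.map f ^ k *ᵥ (f ∘ b)) i := by
  rw [RingHom.map_mulVec, Matrix.map_pow]

/-- The vector `L (Aᵏ b)`, for a linear functional `L` on the ring of coefficients of `A` and `b`,
applied to each coordinate. With `L` the integral, these are the vectors of the rank criterion. -/
def averagedKrylov [CommSemiring K] [Semiring R] [Algebra K R] (L : R →ₗ[K] K) (A : Matrix ι ι R)
    (b : ι → R) (k : ℕ) : ι → K :=
  fun i => L ((A ^ k *ᵥ b) i)

variable [CommRing R]

lemma exists_eval_eq_averagedKrylov_lineMap [CommRing K] [Algebra K R] (L : R →ₗ[K] K)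
    (A A' : Matrix ι ι R) (b b' : ι → R) (k : ℕ) (i : ι) :
    ∃ Q : K[X], ∀ t : K, Q.eval t = averagedKrylov L (AffineMap.lineMap A A' t)
      (AffineMap.lineMap b b' t) k i := by
  let A_X : Matrix ι ι R[X] :=
    AffineMap.lineMap (A.map Polynomial.C) (A'.map Polynomial.C) (X : R[X])
  let b_X : ι → R[X] := AffineMap.lineMap (Polynomial.C ∘ b) (Polynomial.C ∘ b') (X : R[X])
  obtain ⟨Q, hQ⟩ := exists_eval_eq_apply_eval_algebraMap L ((A_X ^ k *ᵥ b_X) i)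
  refine ⟨Q, fun t => ?_⟩
  let ev := evalRingHom (algebraMap K R t)
  have map_A_X : A_X.map ev = AffineMap.lineMap A A' t := by
    ext i j
    simp [A_X, ev, AffineMap.lineMap_apply, Algebra.smul_def t (A' i j - A i j)]
  have map_b_X : ev ∘ b_X = AffineMap.lineMap b b' t := by
    ext i
    simp [b_X, ev, AffineMap.lineMap_apply, Algebra.smul_def]
  rw [hQ, averagedKrylov, ← map_A_X, ← map_b_X, ← map_pow_mulVec, coe_evalRingHom]

theorem eventually_cofinite_span_averagedKrylov_lineMap_eq_top [Field K] [Algebra K R]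
    (L : R →ₗ[K] K) (A : Matrix ι ι R) {A' : Matrix ι ι R} (b : ι → R) {b' : ι → R}
    (h : Submodule.span K (Set.range (averagedKrylov L A' b')) = ⊤) :
    ∀ᶠ t : K in cofinite, Submodule.span K (Set.range (averagedKrylov L
      (AffineMap.lineMap A A' t) (AffineMap.lineMap b b' t))) = ⊤ := by
  choose Q hQ using exists_eval_eq_averagedKrylov_lineMap L A A' b b'
  have eval_Q (t : K) : (fun k i => (Q k i).eval t)
      = averagedKrylov L (AffineMap.lineMap A A' t) (AffineMap.lineMap b b' t) :=
    funext₂ fun k i => hQ k i t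
  simp only [← eval_Q]
  apply eventually_cofinite_span_eval_eq_top (t₀ := 1)
  rwa [eval_Q, AffineMap.lineMap_apply_one, AffineMap.lineMap_apply_one]

end AveragedKrylov

section BoundedContinuous

variable {ι : Type*} [Fintype ι] [DecidableEq ι] {n : ℕ} {S : Type*} [TopologicalSpace S]

/-- The coordinate functions of a bounded continuous function with values in a finite power. -/
noncomputable def boundedCoords (ι : Type*) [Fintype ι] (E : Type*) [NormedAddCommGroup E]
    [NormedSpace ℝ E] (S : Type*) [TopologicalSpace S] : (S →ᵇ (ι → E)) →ₗ[ℝ] ι → S →ᵇ E :=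
  LinearMap.pi fun i =>
    ((ContinuousLinearMap.proj i : (ι → E) →L[ℝ] E).compLeftContinuousBounded S).toLinearMap

/-- The matrix of entries, over the ring `S →ᵇ ℝ`, of a bounded continuous matrix-valued
function. -/
noncomputable def boundedEntries (ι κ : Type*) [Fintype ι] [Fintype κ] (S : Type*)
    [TopologicalSpace S] : (S →ᵇ (ι → κ → ℝ)) →ₗ[ℝ] Matrix ι κ (S →ᵇ ℝ) :=
  (Matrix.ofLinearEquiv ℝ).toLinearMap ∘ₗ (boundedCoords κ ℝ S).compLeft ι ∘ₗ
    boundedCoords ι (κ → ℝ) S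

lemma pow_boundedEntries_mulVec_boundedCoords_apply (A : S →ᵇ (ι → ι → ℝ)) (b : S →ᵇ (ι → ℝ))
    (k : ℕ) (i : ι) (σ : S) :
    (boundedEntries ι ι S A ^ k *ᵥ boundedCoords ι ℝ S b) i σ
      = (Matrix.of (A σ) ^ k *ᵥ b σ) i :=
  map_pow_mulVec ((ContinuousMap.evalAlgHom ℝ ℝ σ).comp (toContinuousMapₐ ℝ)).toRingHom _ _ k i

variable [MeasurableSpace S] [OpensMeasurableSpace S] (μ : Measure S) [IsFiniteMeasure μ]

/-- Integration against a finite measure, as a linear functional on bounded continuous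
functions. -/
noncomputable def boundedIntegral : (S →ᵇ ℝ) →ₗ[ℝ] ℝ where
  toFun f := ∫ σ, f σ ∂μ
  map_add' f g := integral_add (f.integrable μ) (g.integrable μ)
  map_smul' c f := integral_smul c f

lemma averagedKrylov_boundedIntegral (A : S →ᵇ (ι → ι → ℝ)) (b : S →ᵇ (ι → ℝ)) (k : ℕ) :
    averagedKrylov (boundedIntegral μ) (boundedEntries ι ι S A) (boundedCoords ι ℝ S b) k
      = ∫ σ, Matrix.of (A σ) ^ k *ᵥ b σ ∂μ := by
  have integrable_coord (i : ι) :
      Integrable (fun σ => (Matrix.of (A σ) ^ k *ᵥ b σ) i) μ := by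
    simp only [← pow_boundedEntries_mulVec_boundedCoords_apply]
    exact BoundedContinuousFunction.integrable μ _
  ext i
  rw [eval_integral integrable_coord]
  simp only [← pow_boundedEntries_mulVec_boundedCoords_apply]
  rfl

lemma rankCriterionB_iff_span_averagedKrylov
    (p : (S →ᵇ (Fin n → Fin n → ℝ)) × (S →ᵇ (Fin n → ℝ))) :
    RankCriterionB μ p ↔ Submodule.span ℝ (Set.range (averagedKrylov (boundedIntegral μ)
      (boundedEntries (Fin n) (Fin n) S p.1) (boundedCoords (Fin n) ℝ S p.2))) = ⊤ := by
  simp only [RankCriterionB, Set.range, averagedKrylov_boundedIntegral, eq_comm]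

variable {μ} in
theorem RankCriterionB.eventually_cofinite_lineMap
    (p : (S →ᵇ (Fin n → Fin n → ℝ)) × (S →ᵇ (Fin n → ℝ)))
    {q : (S →ᵇ (Fin n → Fin n → ℝ)) × (S →ᵇ (Fin n → ℝ))} (hq : RankCriterionB μ q) :
    ∀ᶠ t : ℝ in cofinite, RankCriterionB μ (AffineMap.lineMap p q t) := by
  rw [rankCriterionB_iff_span_averagedKrylov] at hq
  filter_upwards [eventually_cofinite_span_averagedKrylov_lineMap_eq_top _
    (boundedEntries (Fin n) (Fin n) S p.1) (boundedCoords (Fin n) ℝ S p.2) hq] with t ht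
  rw [rankCriterionB_iff_span_averagedKrylov, AffineMap.fst_lineMap, AffineMap.snd_lineMap]
  have map_A := (boundedEntries (Fin n) (Fin n) S).toAffineMap.apply_lineMap p.1 q.1 t
  have map_b := (boundedCoords (Fin n) ℝ S).toAffineMap.apply_lineMap p.2 q.2 t
  rw [LinearMap.coe_toAffineMap] at map_A map_b
  rwa [map_A, map_b]

theorem stmt3_general {V : Set ((S →ᵇ (Fin n → Fin n → ℝ)) × (S →ᵇ (Fin n → ℝ)))}
    (hV : Convex ℝ V) (hne : ∃ q : V, RankCriterionB μ q.val) :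
    Dense {q : V | RankCriterionB μ q.val} := by
  obtain ⟨q, hq⟩ := hne
  refine Subtype.dense_iff.mpr fun p hp => ?_
  have tendsto_p : Tendsto (AffineMap.lineMap p q.val : ℝ → _) (𝓝[>] 0) (𝓝 p) := by
    have h := (AffineMap.lineMap_continuous (p := p) (q := q.val) (R := ℝ)).tendsto 0
    rw [AffineMap.lineMap_apply_zero] at h
    exact h.mono_left nhdsWithin_le_nhds
  have eventually_rank : ∀ᶠ t : ℝ in 𝓝[>] 0, RankCriterionB μ (AffineMap.lineMap p q.val t) :=
    (hq.eventually_cofinite_lineMap p).filter_mono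
      ((nhdsGT_le_nhdsNE 0).trans (nhdsNE_le_cofinite 0))
  refine mem_closure_of_tendsto tendsto_p ?_
  filter_upwards [eventually_rank, Ioo_mem_nhdsGT one_pos] with t ht ht01
  exact ⟨⟨_, hV.lineMap_mem hp q.2 (Set.Ioo_subset_Icc_self ht01)⟩, ht, rfl⟩

end BoundedContinuous

lemma convex_VG {n : ℕ} (E : Set (Node n × Node n)) (S : Type*) [TopologicalSpace S] :
    Convex ℝ (VG n E S) := by
  rintro p hp q hq a b - - -
  exact ⟨fun σ i j h => by simp [hp.1 σ i j h, hq.1 σ i j h],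
    fun σ i h => by simp [hp.2 σ i h, hq.2 σ i h]⟩

/-- if nonempty, the set `𝕍_*(G)` of averaged-controllable compliant
pairs is dense in `𝕍(G)` for the uniform topology. -/
theorem stmt3 {n : ℕ} (hn : 1 ≤ n) (E : Set (Node n × Node n)) (hG : MemG n E)
    (S : Type*) [TopologicalSpace S] [MeasurableSpace S] [BorelSpace S]
    (μ : Measure S) [IsProbabilityMeasure μ]
    (hne : ∃ q : ↥(VG n E S), RankCriterionB μ q.val) :
    Dense {q : ↥(VG n E S) | RankCriterionB μ q.val} :=
  stmt3_general μ (convex_VG E S) hne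
end

section
/- Let n ≥ 1 and let G ∈ 𝒢_{n,1} be reduced. Then for every node v of G there exists exactly one path in G from β to v. -/
open MeasureTheory

/-- `w` is a walk of length `k` from `u` to `v` in the digraph with edge set `E`. -/
def IsWalk {V : Type*} (E : Set (V × V)) (k : ℕ) (w : ℕ → V) (u v : V) : Prop :=
  w 0 = u ∧ w k = v ∧ ∀ t < k, (w t, w (t + 1)) ∈ E

/-- A path is a walk with no repeated node. -/
def IsPath {V : Type*} (E : Set (V × V)) (k : ℕ) (w : ℕ → V) (u v : V) : Prop :=
  IsWalk E k w u v ∧ ∀ s ≤ k, ∀ t ≤ k, w s = w t → s = t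

/-- A cycle of length `k ≥ 1` from `u` to itself, all nodes pairwise distinct except
the coinciding endpoints. -/
def IsCycle {V : Type*} (E : Set (V × V)) (k : ℕ) (w : ℕ → V) (u : V) : Prop :=
  1 ≤ k ∧ IsWalk E k w u u ∧ ∀ s < k, ∀ t < k, w s = w t → s = t

def Reachable {V : Type*} (E : Set (V × V)) (u v : V) : Prop :=
  ∃ k w, IsWalk E k w u v

/-- `u` lies on a cycle of the digraph. -/
def OnCycle {V : Type*} (E : Set (V × V)) (u : V) : Prop :=
  ∃ k w, IsCycle E k w u

/-- `V⁺_cyc`: nodes reachable by a walk from some node lying on a cycle. -/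
def CycSucc {V : Type*} (E : Set (V × V)) : Set V :=
  {v | ∃ u, OnCycle E u ∧ Reachable E u v}

/-- The node set of the core relative to a node set `N`: `N \ V⁺_cyc`. -/
def CoreOn {W : Type*} (N : Set W) (F : Set (W × W)) : Set W := N \ CycSucc F

/-- The node set `V*` of the core `G*` of `G`. -/
def CoreNodes (n : ℕ) (E : Set (Node n × Node n)) : Set (Node n) :=
  CoreOn Set.univ E

/-- The core of `G` contains a directed spanning path: a path of `G` whose node set
is exactly `V*`. -/
def HasCoreSpanningPath (n : ℕ) (E : Set (Node n × Node n)) : Prop :=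
  ∃ (k : ℕ) (w : ℕ → Node n) (u v : Node n), IsPath E k w u v ∧
    {x | ∃ t ≤ k, w t = x} = CoreNodes n E

/-- A compliant pair `(A, b) ∈ 𝕍(G)`: bounded continuous, with the sparsity
pattern dictated by the edge set `E`. -/
def Compliant {n : ℕ} {S : Type*} [TopologicalSpace S] (E : Set (Node n × Node n))
    (A : S → Fin n → Fin n → ℝ) (b : S → Fin n → ℝ) : Prop :=
  Continuous A ∧ Continuous b ∧
  (∃ C, ∀ σ i j, |A σ i j| ≤ C) ∧ (∃ C, ∀ σ i, |b σ i| ≤ C) ∧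
  (∀ σ (i j : Fin n), ((some j : Node n), (some i : Node n)) ∉ E → A σ i j = 0) ∧
  (∀ σ (i : Fin n), ((none : Node n), (some i : Node n)) ∉ E → b σ i = 0)

/-- The averaged-controllability rank criterion: the span of the Bochner integrals
`∫ A(σ)^k b(σ) dμ`, `k ∈ ℕ`, is all of `ℝⁿ`. -/
def RankCriterion {n : ℕ} {S : Type*} [MeasurableSpace S]
    (μ : Measure S) (A : S → Fin n → Fin n → ℝ) (b : S → Fin n → ℝ) : Prop :=
  Submodule.span ℝ {x : Fin n → ℝ |
    ∃ k : ℕ, x = ∫ σ, (Matrix.of (A σ) ^ k).mulVec (b σ) ∂μ} = ⊤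

/-- `S` is a topological manifold of dimension `d`. -/
def IsTopManifold (d : ℕ) (S : Type*) [TopologicalSpace S] : Prop :=
  ∀ x : S, ∃ U : Set S, IsOpen U ∧ x ∈ U ∧
    ∃ W : Set (EuclideanSpace ℝ (Fin d)), IsOpen W ∧ Nonempty (↥U ≃ₜ ↥W)

/-- The support of `μ` contains a nonempty open set. -/
def SupportHasOpen {S : Type*} [TopologicalSpace S] [MeasurableSpace S]
    (μ : Measure S) : Prop :=
  ∃ U : Set S, IsOpen U ∧ U.Nonempty ∧ ∀ W ⊆ U, IsOpen W → W.Nonempty → 0 < μ W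

/-- There is exactly one path from `u` to `v`. -/
def UniquePathFrom {V : Type*} (E : Set (V × V)) (u v : V) : Prop :=
  (∃ k w, IsPath E k w u v) ∧
  ∀ (k : ℕ) (w : ℕ → V) (k' : ℕ) (w' : ℕ → V),
    IsPath E k w u v → IsPath E k' w' u v → k = k' ∧ ∀ t ≤ k, w t = w' t

/-- A directed tree on the node set `N`: there is a unique root, from which every node
is reachable by a unique path. -/
def IsDirectedTree {W : Type*} (N : Set W) (F : Set (W × W)) : Prop :=
  ∃ r ∈ N, (∀ v ∈ N, UniquePathFrom F r v) ∧
    (∀ r' ∈ N, (∀ v ∈ N, Reachable F r' v) → r' = r)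

/-- The strong component of `u`: nodes mutually reachable with `u`. -/
def StrongComp {V : Type*} (E : Set (V × V)) (u : V) : Set V :=
  {v | Reachable E u v ∧ Reachable E v u}

/-- The nodes of the skeleton graph (condensation): the strong components. -/
def SkelNodes {V : Type*} (E : Set (V × V)) : Set (Set V) :=
  {C | ∃ u, C = StrongComp E u}

/-- The edges of the skeleton graph: `(C, C')` is an edge whenever some edge of `E`
goes from a node of `C` to a node of `C'`. -/
def SkelEdges {V : Type*} (E : Set (V × V)) : Set (Set V × Set V) :=
  {p | p.1 ∈ SkelNodes E ∧ p.2 ∈ SkelNodes E ∧ ∃ u ∈ p.1, ∃ v ∈ p.2, (u, v) ∈ E}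

/-- The induced subgraph on `N` (w.r.t. the ambient edge set `F`) is a directed path:
its nodes can be ordered `w 0, …, w r` so that its edges are exactly the consecutive
pairs. -/
def IsPathGraphOn {W : Type*} (N : Set W) (F : Set (W × W)) : Prop :=
  ∃ (r : ℕ) (w : ℕ → W), (∀ s ≤ r, ∀ t ≤ r, w s = w t → s = t) ∧
    {x | ∃ t ≤ r, w t = x} = N ∧
    (∀ p : W × W, (p ∈ F ∧ p.1 ∈ N ∧ p.2 ∈ N) ↔ ∃ t < r, p = (w t, w (t + 1)))

/-- The induced subgraph on `C` is a single directed cycle: its nodes can be cyclically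
ordered so that its edges are exactly the consecutive pairs. -/
def IsSingleCycleOn {V : Type*} (C : Set V) (E : Set (V × V)) : Prop :=
  ∃ (l : ℕ) (w : ℕ → V), 1 ≤ l ∧ (∀ s < l, ∀ t < l, w s = w t → s = t) ∧
    {x | ∃ t < l, w t = x} = C ∧
    (∀ p : V × V, (p ∈ E ∧ p.1 ∈ C ∧ p.2 ∈ C) ↔ ∃ t < l, p = (w t, w ((t + 1) % l)))

/-- `G ∈ 𝒢_{n,1}` is reduced (Definition 5 of the paper): (1) the skeleton graph `S`
with self-loops removed is a directed tree and the core `S*` of `S` is a directed path;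
(2) every edge of `S` between distinct components comes from a unique edge of `G`;
(3) every node of `S` with a self-loop is an out-neighbor of `S*`, and every nontrivial
strong component of `G` is a single directed cycle. -/
def ReducedGraph (n : ℕ) (E : Set (Node n × Node n)) : Prop :=
  MemG n E ∧
  IsDirectedTree (SkelNodes E) {p ∈ SkelEdges E | p.1 ≠ p.2} ∧
  IsPathGraphOn (CoreOn (SkelNodes E) (SkelEdges E)) (SkelEdges E) ∧
  (∀ p ∈ SkelEdges E, p.1 ≠ p.2 →
    ∃! e : Node n × Node n, e ∈ E ∧ e.1 ∈ p.1 ∧ e.2 ∈ p.2) ∧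
  (∀ C : Set (Node n), (C, C) ∈ SkelEdges E →
    (∃ C' ∈ CoreOn (SkelNodes E) (SkelEdges E), (C', C) ∈ SkelEdges E) ∧
    IsSingleCycleOn C E)

/-!
Condensing `E` turns it into a tree whose edges each come from a single edge of `E`, so at most one
edge enters a given strong component from outside; inside a component, which is a directed cycle or
a single node without a loop, every node has at most one in-neighbour. Two paths from `u` to `v` are
therefore compared backwards from `v`: their last edges coincide if both start inside the component
of `v`, or both outside. In the mixed case let `e` be the one that starts outside. Then `u` lies
outside too, since no walk leaves a strong component and returns to it; so the path whose last edge
is inside enters the component earlier, necessarily through `e`, and visits `v` twice.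
-/

section Walks

variable {V : Type*} {E F : Set (V × V)} {u v x : V} {k : ℕ} {w : ℕ → V}

theorem IsWalk.snoc (h : IsWalk E k w u v) (hvx : (v, x) ∈ E) :
    IsWalk E (k + 1) (Function.update w (k + 1) x) u x := by
  obtain ⟨rfl, rfl, hE⟩ := h
  refine ⟨Function.update_of_ne (by omega) .., Function.update_self .., fun t ht => ?_⟩
  rw [Function.update_of_ne (by omega : t ≠ k + 1)]
  rcases Nat.lt_succ_iff_lt_or_eq.mp ht with ht | rfl
  · rw [Function.update_of_ne (by omega)]
    exact hE t ht
  · rwa [Function.update_self]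

theorem IsWalk.reachable_of_le (h : IsWalk E k w u v) {s t : ℕ} (hst : s ≤ t) (htk : t ≤ k) :
    Reachable E (w s) (w t) :=
  ⟨t - s, fun i => w (s + i), rfl, congrArg w (Nat.add_sub_of_le hst),
    fun i hi => h.2.2 (s + i) (by omega)⟩

theorem reachable_iff_reflTransGen :
    Reachable E u v ↔ Relation.ReflTransGen (fun a b => (a, b) ∈ E) u v := by
  constructor
  · rintro ⟨k, w, rfl, rfl, hE⟩
    induction k with
    | zero => exact .refl
    | succ k ih => exact (ih fun t ht => hE t (by omega)).tail (hE k (by omega))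
  · intro h
    induction h with
    | refl => exact ⟨0, fun _ => u, rfl, rfl, by simp⟩
    | tail _ hbc ih =>
      obtain ⟨k, w, hw⟩ := ih
      exact ⟨k + 1, _, hw.snoc hbc⟩

theorem Reachable.refl (E : Set (V × V)) (u : V) : Reachable E u u :=
  reachable_iff_reflTransGen.mpr .refl

theorem Reachable.of_mem (h : (u, v) ∈ E) : Reachable E u v :=
  reachable_iff_reflTransGen.mpr (.single h)

theorem Reachable.trans (huv : Reachable E u v) (hvx : Reachable E v x) : Reachable E u x :=
  reachable_iff_reflTransGen.mpr
    ((reachable_iff_reflTransGen.mp huv).trans (reachable_iff_reflTransGen.mp hvx))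

theorem Reachable.mono (hEF : E ⊆ F) (h : Reachable E u v) : Reachable F u v :=
  let ⟨k, w, h0, hk, hE⟩ := h
  ⟨k, w, h0, hk, fun t ht => hEF (hE t ht)⟩

theorem Reachable.eq_of_forall_ne (h : Reachable E u v) (hv : ∀ e ∈ E, e.2 ≠ v) : u = v := by
  rcases (reachable_iff_reflTransGen.mp h).cases_tail with rfl | ⟨c, -, hcv⟩
  · rfl
  · exact absurd rfl (hv _ hcv)

theorem IsPath.take (h : IsPath E k w u v) {t : ℕ} (ht : t ≤ k) : IsPath E t w u (w t) :=
  ⟨⟨h.1.1, rfl, fun s hs => h.1.2.2 s (by omega)⟩,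
    fun s hs s' hs' => h.2 s (by omega) s' (by omega)⟩

theorem IsPath.last_edge_mem (h : IsPath E (k + 1) w u v) : (w k, v) ∈ E :=
  h.1.2.1 ▸ h.1.2.2 k k.lt_succ_self

theorem IsPath.length_eq_zero (h : IsPath E k w u u) : k = 0 :=
  h.2 k le_rfl 0 k.zero_le (h.1.2.1.trans h.1.1.symm)

theorem IsPath.snoc (h : IsPath E k w u v) (hvx : (v, x) ∈ E) (hx : ∀ t ≤ k, w t ≠ x) :
    IsPath E (k + 1) (Function.update w (k + 1) x) u x := by
  refine ⟨h.1.snoc hvx, fun s hs t ht hst => ?_⟩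
  simp only [Function.update_apply] at hst
  split_ifs at hst with hs' ht' ht'
  · omega
  · exact absurd hst.symm (hx t (by omega))
  · exact absurd hst (hx s (by omega))
  · exact h.2 s (by omega) t (by omega) hst

theorem Reachable.exists_isPath (h : Reachable E u v) : ∃ k w, IsPath E k w u v := by
  rw [reachable_iff_reflTransGen] at h
  induction h with
  | refl => exact ⟨0, fun _ => u, ⟨rfl, rfl, by simp⟩, by intros; omega⟩
  | @tail b c _ hbc ih =>
    obtain ⟨k, w, hw⟩ := ih
    by_cases hc : ∀ t ≤ k, w t ≠ c
    · exact ⟨k + 1, _, hw.snoc hbc hc⟩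
    · push Not at hc
      obtain ⟨t, ht, rfl⟩ := hc
      exact ⟨t, w, hw.take ht⟩

theorem IsDirectedTree.eq_of_mem_of_mem {N : Set V} (h : IsDirectedTree N E) {a b c : V}
    (ha : a ∈ N) (hb : b ∈ N) (hc : c ∈ N) (hac : (a, c) ∈ E) (hbc : (b, c) ∈ E)
    (hca : ¬ Reachable E c a) (hcb : ¬ Reachable E c b) : a = b := by
  obtain ⟨r, -, hr, -⟩ := h
  have path_through : ∀ d ∈ N, (d, c) ∈ E → ¬ Reachable E c d →
      ∃ k w, IsPath E (k + 1) w r c ∧ w k = d := by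
    intro d hd hdc hcd
    obtain ⟨k, w, hw⟩ := (hr d hd).1
    have avoids_c : ∀ t ≤ k, w t ≠ c := by
      rintro t ht rfl
      exact hcd (hw.1.2.1 ▸ hw.1.reachable_of_le ht le_rfl)
    exact ⟨k, _, hw.snoc hdc avoids_c,
      (Function.update_of_ne (by omega) ..).trans hw.1.2.1⟩
  obtain ⟨k, w, hw, rfl⟩ := path_through a ha hac hca
  obtain ⟨k', w', hw', rfl⟩ := path_through b hb hbc hcb
  obtain ⟨hk, hww'⟩ := (hr c hc).2 _ _ _ _ hw hw'
  obtain rfl : k = k' := by omega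
  exact hww' k (by omega)

end Walks

section StrongComponents

variable {V : Type*} {E : Set (V × V)} {C D : Set V} {u x y : V}

theorem mem_strongComp_self (E : Set (V × V)) (u : V) : u ∈ StrongComp E u :=
  ⟨.refl E u, .refl E u⟩

theorem eq_strongComp_of_mem (hC : C ∈ SkelNodes E) (hx : x ∈ C) : C = StrongComp E x := by
  obtain ⟨u, rfl⟩ := hC
  ext y
  exact ⟨fun hy => ⟨hx.2.trans hy.1, hy.2.trans hx.1⟩,
    fun hy => ⟨hx.1.trans hy.1, hy.2.trans hx.2⟩⟩

theorem reachable_of_mem_of_mem (hC : C ∈ SkelNodes E) (hx : x ∈ C) (hy : y ∈ C) :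
    Reachable E x y := by
  rw [eq_strongComp_of_mem hC hx] at hy
  exact hy.1

theorem reachable_of_reachable_skelEdges (hC : C ∈ SkelNodes E)
    (h : Reachable (SkelEdges E) C D) (hx : x ∈ C) (hy : y ∈ D) : Reachable E x y := by
  rw [reachable_iff_reflTransGen] at h
  induction h generalizing y with
  | refl => exact reachable_of_mem_of_mem hC hx hy
  | tail _ hAB ih =>
    obtain ⟨-, hB, a, ha, b, hb, hab⟩ := hAB
    exact ((ih ha).trans (.of_mem hab)).trans (reachable_of_mem_of_mem hB hb hy)

theorem eq_of_mem_skelEdges_of_reachable (hDC : (D, C) ∈ SkelEdges E)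
    (hCD : Reachable (SkelEdges E) C D) : D = C := by
  obtain ⟨hD, hC, d, hd, c, hc, hdc⟩ := hDC
  have hcd : Reachable E c d := reachable_of_reachable_skelEdges hC hCD hc hd
  have hcD : c ∈ D := (eq_strongComp_of_mem hD hd).symm.subset ⟨.of_mem hdc, hcd⟩
  exact (eq_strongComp_of_mem hD hcD).trans (eq_strongComp_of_mem hC hc).symm

theorem exists_forall_reachable_of_isDirectedTree
    (htree : IsDirectedTree (SkelNodes E) {p ∈ SkelEdges E | p.1 ≠ p.2}) :
    ∃ u, ∀ v, Reachable E u v := by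
  obtain ⟨_, ⟨u, rfl⟩, hr, -⟩ := htree
  refine ⟨u, fun v => ?_⟩
  obtain ⟨k, w, hw⟩ := (hr (StrongComp E v) ⟨v, rfl⟩).1
  exact reachable_of_reachable_skelEdges ⟨u, rfl⟩ (.mono (Set.sep_subset _ _) ⟨k, w, hw.1⟩)
    (mem_strongComp_self E u) (mem_strongComp_self E v)

theorem reachable_of_isDirectedTree_of_forall_ne
    (htree : IsDirectedTree (SkelNodes E) {p ∈ SkelEdges E | p.1 ≠ p.2})
    (hu : ∀ e ∈ E, e.2 ≠ u) (v : V) : Reachable E u v := by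
  obtain ⟨r, hr⟩ := exists_forall_reachable_of_isDirectedTree htree
  exact (hr u).eq_of_forall_ne hu ▸ hr v

theorem IsSingleCycleOn.eq_of_mem_of_mem (h : IsSingleCycleOn C E) {a b : V}
    (ha : a ∈ C) (hb : b ∈ C) (hx : x ∈ C) (hax : (a, x) ∈ E) (hbx : (b, x) ∈ E) : a = b := by
  obtain ⟨l, w, hl, hinj, -, hedge⟩ := h
  obtain ⟨s, hs, has⟩ := (hedge (a, x)).mp ⟨hax, ha, hx⟩
  obtain ⟨t, ht, hbt⟩ := (hedge (b, x)).mp ⟨hbx, hb, hx⟩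
  obtain ⟨rfl, hxs⟩ := Prod.mk.inj has
  obtain ⟨rfl, hxt⟩ := Prod.mk.inj hbt
  have hsucc : s + 1 ≡ t + 1 [MOD l] :=
    hinj _ (Nat.mod_lt _ hl) _ (Nat.mod_lt _ hl) (hxs.symm.trans hxt)
  rw [(Nat.ModEq.add_right_cancel' 1 hsucc).eq_of_lt_of_lt hs ht]

end StrongComponents

section EnteringEdges

variable {V : Type*} {E : Set (V × V)} {C : Set V} {u v a : V} {k k' : ℕ} {w w' : ℕ → V}

/-- The edges of `E` entering the node set `C` from outside; for a strong component `C` these are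
the edges of `E` lying over the edges of the skeleton graph that end at `C`, self-loop excluded. -/
def enteringEdges (E : Set (V × V)) (C : Set V) : Set (V × V) :=
  {e ∈ E | e.1 ∉ C ∧ e.2 ∈ C}

theorem IsWalk.exists_mem_enteringEdges (h : IsWalk E k w u v) (hu : u ∉ C) {m : ℕ}
    (hmk : m ≤ k) (hm : w m ∈ C) : ∃ t < m, (w t, w (t + 1)) ∈ enteringEdges E C := by
  induction m with
  | zero => exact absurd (h.1 ▸ hm) hu
  | succ m ih =>
    by_cases hwm : w m ∈ C
    · obtain ⟨t, ht, hent⟩ := ih (by omega) hwm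
      exact ⟨t, by omega, hent⟩
    · exact ⟨m, by omega, h.2.2 m (by omega), hwm, hm⟩

theorem subsingleton_enteringEdges
    (htree : IsDirectedTree (SkelNodes E) {p ∈ SkelEdges E | p.1 ≠ p.2})
    (hedge : ∀ p ∈ SkelEdges E, p.1 ≠ p.2 → ∃! e : V × V, e ∈ E ∧ e.1 ∈ p.1 ∧ e.2 ∈ p.2)
    (hC : C ∈ SkelNodes E) : (enteringEdges E C).Subsingleton := by
  have skel_edge : ∀ e ∈ enteringEdges E C,
      (StrongComp E e.1, C) ∈ {p ∈ SkelEdges E | p.1 ≠ p.2} := by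
    rintro ⟨a, x⟩ ⟨he, ha, hx⟩
    exact ⟨⟨⟨a, rfl⟩, hC, a, mem_strongComp_self E a, x, hx, he⟩,
      fun heq : StrongComp E a = C => ha (heq ▸ mem_strongComp_self E a)⟩
  have acyclic : ∀ e ∈ enteringEdges E C,
      ¬ Reachable {p ∈ SkelEdges E | p.1 ≠ p.2} C (StrongComp E e.1) := fun e he hreach =>
    (skel_edge e he).2 (eq_of_mem_skelEdges_of_reachable (skel_edge e he).1
      (hreach.mono (Set.sep_subset _ _)))
  intro e he f hf
  have same_source : StrongComp E e.1 = StrongComp E f.1 :=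
    htree.eq_of_mem_of_mem ⟨e.1, rfl⟩ ⟨f.1, rfl⟩ hC (skel_edge e he) (skel_edge f hf)
      (acyclic e he) (acyclic f hf)
  exact (hedge _ (skel_edge e he).1 (skel_edge e he).2).unique
    ⟨he.1, mem_strongComp_self E e.1, he.2.2⟩
    ⟨hf.1, same_source ▸ mem_strongComp_self E f.1, hf.2.2⟩

theorem IsPath.penultimate_notMem_strongComp (h : IsPath E (k + 1) w u v)
    (hent : (enteringEdges E (StrongComp E v)).Subsingleton)
    (hua : Reachable E u a) (hav : (a, v) ∈ E) (ha : a ∉ StrongComp E v) :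
    w k ∉ StrongComp E v := by
  intro hwk
  have hu : u ∉ StrongComp E v := fun hu => ha ⟨hu.1.trans hua, .of_mem hav⟩
  obtain ⟨t, htk, ht⟩ := h.1.exists_mem_enteringEdges hu k.le_succ hwk
  have hwt : w (t + 1) = v :=
    congrArg Prod.snd (hent ht (y := (a, v)) ⟨hav, ha, mem_strongComp_self E v⟩)
  have := h.2 (t + 1) (by omega) (k + 1) le_rfl (hwt.trans h.1.2.1.symm)
  omega

theorem IsPath.penultimate_eq (h : IsPath E (k + 1) w u v) (h' : IsPath E (k' + 1) w' u v)
    (hent : (enteringEdges E (StrongComp E v)).Subsingleton)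
    (hint : ∀ a ∈ StrongComp E v, ∀ b ∈ StrongComp E v, (a, v) ∈ E → (b, v) ∈ E → a = b) :
    w k = w' k' := by
  have hv := mem_strongComp_self E v
  have hreach : Reachable E u (w k) := ⟨k, w, (h.take k.le_succ).1⟩
  have hreach' : Reachable E u (w' k') := ⟨k', w', (h'.take k'.le_succ).1⟩
  by_cases hin : w k ∈ StrongComp E v
  · by_cases hin' : w' k' ∈ StrongComp E v
    · exact hint _ hin _ hin' h.last_edge_mem h'.last_edge_mem
    · exact absurd hin (h.penultimate_notMem_strongComp hent hreach' h'.last_edge_mem hin')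
  · have hout' := h'.penultimate_notMem_strongComp hent hreach h.last_edge_mem hin
    exact congrArg Prod.fst
      (hent (x := (w k, v)) (y := (w' k', v)) ⟨h.last_edge_mem, hin, hv⟩
        ⟨h'.last_edge_mem, hout', hv⟩)

theorem IsPath.unique (hent : ∀ x, (enteringEdges E (StrongComp E x)).Subsingleton)
    (hint : ∀ x, ∀ a ∈ StrongComp E x, ∀ b ∈ StrongComp E x, (a, x) ∈ E → (b, x) ∈ E → a = b)
    (h : IsPath E k w u v) (h' : IsPath E k' w' u v) : k = k' ∧ ∀ t ≤ k, w t = w' t := by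
  induction k generalizing v k' with
  | zero =>
    obtain rfl : u = v := h.1.1.symm.trans h.1.2.1
    refine ⟨h'.length_eq_zero.symm, fun t ht => ?_⟩
    rw [Nat.le_zero.mp ht, h.1.1, h'.1.1]
  | succ k ih =>
    cases k' with
    | zero =>
      obtain rfl : u = v := h'.1.1.symm.trans h'.1.2.1
      exact absurd h.length_eq_zero k.succ_ne_zero
    | succ k' =>
      have hpen : w k = w' k' := h.penultimate_eq h' (hent v) (hint v)
      obtain ⟨rfl, hagree⟩ := ih (h.take k.le_succ) (hpen ▸ h'.take k'.le_succ)
      refine ⟨rfl, fun t ht => ?_⟩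
      rcases Nat.le_succ_iff.mp ht with ht | rfl
      · exact hagree t ht
      · exact h.1.2.1.trans h'.1.2.1.symm

end EnteringEdges

theorem stmt8_general {V : Type*} {E : Set (V × V)}
    (htree : IsDirectedTree (SkelNodes E) {p ∈ SkelEdges E | p.1 ≠ p.2})
    (hedge : ∀ p ∈ SkelEdges E, p.1 ≠ p.2 → ∃! e : V × V, e ∈ E ∧ e.1 ∈ p.1 ∧ e.2 ∈ p.2)
    (hcycle : ∀ C, (C, C) ∈ SkelEdges E → IsSingleCycleOn C E)
    {u v : V} (huv : Reachable E u v) : UniquePathFrom E u v := by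
  have hent : ∀ x, (enteringEdges E (StrongComp E x)).Subsingleton := fun x =>
    subsingleton_enteringEdges htree hedge ⟨x, rfl⟩
  have hint : ∀ x, ∀ a ∈ StrongComp E x, ∀ b ∈ StrongComp E x,
      (a, x) ∈ E → (b, x) ∈ E → a = b := by
    intro x a ha b hb hax hbx
    have hx := mem_strongComp_self E x
    have hloop : (StrongComp E x, StrongComp E x) ∈ SkelEdges E :=
      ⟨⟨x, rfl⟩, ⟨x, rfl⟩, a, ha, x, hx, hax⟩
    exact (hcycle _ hloop).eq_of_mem_of_mem ha hb hx hax hbx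
  exact ⟨huv.exists_isPath, fun _ _ _ _ => IsPath.unique hent hint⟩

/-- in a reduced graph `G ∈ 𝒢_{n,1}` there is exactly one path from `β`
to every node. -/
theorem stmt8 {n : ℕ} (hn : 1 ≤ n) (E : Set (Node n × Node n))
    (hred : ReducedGraph n E) :
    ∀ v : Node n, UniquePathFrom E (none : Node n) v := by
  obtain ⟨⟨hβ, -⟩, htree, -, hedge, hcycle⟩ := hred
  exact fun v => stmt8_general htree hedge (fun C hC => (hcycle C hC).2)
    (reachable_of_isDirectedTree_of_forall_ne htree hβ v)
end
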